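/- Let θ₁, ..., θ₆ ∈ (0, π), a_j = e^{iθ_j}, and let G be the associated Gram matrix with det G > 0. With z₀ = (-q₁ + √(q₁² - 4q₀q₂))/(2q₂) the distinguished root of the quadratic q₂z² + q₁z + q₀ = 0, define φ = ((a₁+a₂a₃)(a₁a₂a₃+1)(a₁+a₅a₆)(a₁a₅a₆+1)) / ((a₁a₂+a₃)(a₁a₃+a₂)(a₁a₅+a₆)(a₁a₆+a₅)) and ψ = ((a₁a₂a₄a₅ - z₀)(a₁a₃a₄a₆ - z₀)) / (a₄(a₁a₂a₃ + z₀)(a₁a₅a₆ + z₀)). Then φψ² = (2c₃₄² - c₃₃c₄₄ + 2i c₃₄ √(det G) sin θ₁)/(c₃₃ c₄₄), where c_ab are the cofactors of G. -/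

import Mathlib

open scoped Real ComplexConjugate

/-!
Let `N / D = φ` as written, and let `μ = a₁² a₂ a₃ a₅ a₆`. Three polynomial identities carry the
proof. First, `N D = 16 μ² c₃₃ c₄₄`, so `φ ψ² = (N ψ)² / (16 μ² c₃₃ c₄₄)`. Second, at a root `z` of
the quadratic, `N ψ = -4 μ (c₃₄ + i r sin θ₁)` with `4 r = 2 q₂ z + q₁`, and `r² = det G` because
the discriminant is `16 det G`. Third, the Jacobi identity
`c₃₃ c₄₄ = c₃₄² + det G sin² θ₁` turns the square `(c₃₄ + i r sin θ₁)²` into the stated numerator.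

No denominator vanishes: since `q₂ = conj q₀` and `q₁` is real, a root on the unit circle would
force `q₁² ≤ 4 |q₀|²`, against `det G > 0`; and the values of the quadratic at four points of the
unit circle are, up to monomials, products containing all the factors of `N` and `D`.
-/

/-- `(a + a⁻¹) / 2`, which is `cos θ` at `a = exp (i θ)`. -/
def halfAddInv {K : Type*} [Field K] (a : K) : K := (a + a⁻¹) / 2

/-- `(a - a⁻¹) / 2`, which is `i sin θ` at `a = exp (i θ)`. -/
def halfSubInv {K : Type*} [Field K] (a : K) : K := (a - a⁻¹) / 2

theorem halfSubInv_sq {K : Type*} [Field K] [NeZero (2 : K)] {a : K} (ha : a ≠ 0) :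
    halfSubInv a ^ 2 = halfAddInv a ^ 2 - 1 := by
  have h2 : (2 : K) ≠ 0 := two_ne_zero
  rw [halfSubInv, halfAddInv]
  field_simp
  ring

theorem halfAddInv_exp_mul_I (t : ℝ) :
    halfAddInv (Complex.exp (t * Complex.I)) = (Real.cos t : ℂ) := by
  rw [halfAddInv, ← Complex.exp_neg, ← neg_mul, Complex.ofReal_cos, Complex.cos]

theorem halfSubInv_exp_mul_I (t : ℝ) :
    halfSubInv (Complex.exp (t * Complex.I)) = Complex.I * (Real.sin t : ℂ) := by
  rw [halfSubInv, ← Complex.exp_neg, ← neg_mul, Complex.ofReal_sin]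
  linear_combination -Complex.I / 2 * Complex.two_sin t
    + (Complex.exp (t * Complex.I) - Complex.exp (-t * Complex.I)) / 2 * Complex.I_sq

theorem sq_le_of_conj_mul_sq_add_eq_zero {p z : ℂ} {b : ℝ} (hz : ‖z‖ = 1)
    (h : conj p * z ^ 2 + b * z + p = 0) : b ^ 2 ≤ 4 * ‖p‖ ^ 2 := by
  have hb : |b| ≤ 2 * ‖p‖ := calc
    |b| = ‖-(b * z)‖ := by simp [hz]
    _ = ‖conj p * z ^ 2 + p‖ := by
      congr 1
      linear_combination -h
    _ ≤ ‖conj p * z ^ 2‖ + ‖p‖ := norm_add_le _ _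
    _ = 2 * ‖p‖ := by
      simp only [norm_mul, RCLike.norm_conj, norm_pow, hz]
      ring
  calc b ^ 2 = |b| ^ 2 := (sq_abs b).symm
    _ ≤ (2 * ‖p‖) ^ 2 := by gcongr
    _ = 4 * ‖p‖ ^ 2 := by ring

-- For `a = 0` the formula gives the junk value `0`, which is still a root when `c = 0`.
theorem quadratic_formula_spec {K : Type*} [Field K] [NeZero (2 : K)] {a b c s : K}
    (h : discrim a b c = s * s) (h₀ : a = 0 → b = s ∧ c = 0) :
    a * ((-b + s) / (2 * a)) ^ 2 + b * ((-b + s) / (2 * a)) + c = 0 ∧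
      2 * a * ((-b + s) / (2 * a)) + b = s := by
  by_cases ha : a = 0
  · obtain ⟨rfl, rfl⟩ := h₀ ha
    simp [ha]
  · constructor
    · rw [sq]
      exact (quadratic_eq_zero_iff ha h _).2 (Or.inl rfl)
    · rw [mul_div_cancel₀ _ (mul_ne_zero two_ne_zero ha)]
      ring

/-- A label for each edge of a tetrahedron, the opposite pairs being `(1, 4)`, `(2, 5)`, `(3, 6)`.
The labels are dihedral angles `θⱼ`, their cosines, or the exponentials `aⱼ = exp (i θⱼ)`. -/
structure EdgeLabels (R : Type*) where
  (a₁ a₂ a₃ a₄ a₅ a₆ : R)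

namespace EdgeLabels

/-- The labels obtained by applying `f` to each label. -/
def map {R S : Type*} (f : R → S) (E : EdgeLabels R) : EdgeLabels S :=
  ⟨f E.a₁, f E.a₂, f E.a₃, f E.a₄, f E.a₅, f E.a₆⟩

/-- The property `P` holds for each of the six labels. -/
def Forall {R : Type*} (P : R → Prop) (E : EdgeLabels R) : Prop :=
  P E.a₁ ∧ P E.a₂ ∧ P E.a₃ ∧ P E.a₄ ∧ P E.a₅ ∧ P E.a₆

theorem Forall.imp {R : Type*} {P Q : R → Prop} {E : EdgeLabels R} (hE : E.Forall P)
    (h : ∀ ⦃a⦄, P a → Q a) : E.Forall Q := by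
  obtain ⟨h₁, h₂, h₃, h₄, h₅, h₆⟩ := hE
  exact ⟨h h₁, h h₂, h h₃, h h₄, h h₅, h h₆⟩

section Gram

variable {R S : Type*} [CommRing R] [CommRing S]

/-- The Gram matrix `G` of a tetrahedron whose dihedral angles have the given cosines. -/
def gram (x : EdgeLabels R) : Matrix (Fin 4) (Fin 4) R :=
  !![1, -x.a₁, -x.a₂, -x.a₆;
     -x.a₁, 1, -x.a₃, -x.a₅;
     -x.a₂, -x.a₃, 1, -x.a₄;
     -x.a₆, -x.a₅, -x.a₄, 1]

/-- The cofactor `c₃₃` of the Gram matrix (rows and columns numbered from `1`). -/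
def cofactor₃₃ (x : EdgeLabels R) : R :=
  (!![1, -x.a₁, -x.a₆; -x.a₁, 1, -x.a₅; -x.a₆, -x.a₅, 1] : Matrix (Fin 3) (Fin 3) R).det

/-- The cofactor `c₄₄` of the Gram matrix (rows and columns numbered from `1`). -/
def cofactor₄₄ (x : EdgeLabels R) : R :=
  (!![1, -x.a₁, -x.a₂; -x.a₁, 1, -x.a₃; -x.a₂, -x.a₃, 1] : Matrix (Fin 3) (Fin 3) R).det

/-- The cofactor `c₃₄` of the Gram matrix (rows and columns numbered from `1`). -/
def cofactor₃₄ (x : EdgeLabels R) : R :=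
  -(!![1, -x.a₁, -x.a₂; -x.a₁, 1, -x.a₃; -x.a₆, -x.a₅, -x.a₄] : Matrix (Fin 3) (Fin 3) R).det

theorem det_gram (x : EdgeLabels R) :
    x.gram.det = 1 - x.a₁ ^ 2 - x.a₂ ^ 2 - x.a₃ ^ 2 - x.a₄ ^ 2 - x.a₅ ^ 2 - x.a₆ ^ 2
      - 2 * x.a₁ * x.a₂ * x.a₃ - 2 * x.a₁ * x.a₅ * x.a₆ - 2 * x.a₂ * x.a₄ * x.a₆
      - 2 * x.a₃ * x.a₄ * x.a₅
      + (x.a₁ * x.a₄) ^ 2 + (x.a₂ * x.a₅) ^ 2 + (x.a₃ * x.a₆) ^ 2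
      - 2 * (x.a₁ * x.a₄) * (x.a₂ * x.a₅) - 2 * (x.a₁ * x.a₄) * (x.a₃ * x.a₆)
      - 2 * (x.a₂ * x.a₅) * (x.a₃ * x.a₆) := by
  rw [gram, Matrix.det_succ_row_zero]
  simp only [Fin.sum_univ_four, Matrix.det_fin_three, Matrix.submatrix_apply, Matrix.of_apply,
    Fin.succAbove, Fin.reduceSucc, Fin.reduceCastSucc, Fin.reduceLT, Fin.coe_ofNat_eq_mod,
    ↓reduceIte, Matrix.cons_val, Matrix.cons_val', Matrix.cons_val_zero, Matrix.cons_val_one,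
    Matrix.cons_val_fin_one]
  ring

theorem cofactor₃₃_eq (x : EdgeLabels R) :
    x.cofactor₃₃ = 1 - x.a₁ ^ 2 - x.a₅ ^ 2 - x.a₆ ^ 2 - 2 * x.a₁ * x.a₅ * x.a₆ := by
  simp only [cofactor₃₃, Matrix.det_fin_three, Matrix.of_apply, Matrix.cons_val',
    Matrix.cons_val_zero, Matrix.cons_val_fin_one, Matrix.cons_val_one, Matrix.cons_val]
  ring

theorem cofactor₄₄_eq (x : EdgeLabels R) :
    x.cofactor₄₄ = 1 - x.a₁ ^ 2 - x.a₂ ^ 2 - x.a₃ ^ 2 - 2 * x.a₁ * x.a₂ * x.a₃ := by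
  simp only [cofactor₄₄, Matrix.det_fin_three, Matrix.of_apply, Matrix.cons_val',
    Matrix.cons_val_zero, Matrix.cons_val_fin_one, Matrix.cons_val_one, Matrix.cons_val]
  ring

theorem cofactor₃₄_eq (x : EdgeLabels R) :
    x.cofactor₃₄ = x.a₄ * (1 - x.a₁ ^ 2) + x.a₃ * x.a₅ + x.a₂ * x.a₆
      + x.a₁ * (x.a₃ * x.a₆ + x.a₂ * x.a₅) := by
  simp only [cofactor₃₄, Matrix.det_fin_three, Matrix.of_apply, Matrix.cons_val',
    Matrix.cons_val_zero, Matrix.cons_val_fin_one, Matrix.cons_val_one, Matrix.cons_val]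
  ring

theorem cofactor₃₃_mul_cofactor₄₄ (x : EdgeLabels R) :
    x.cofactor₃₃ * x.cofactor₄₄ = x.cofactor₃₄ ^ 2 + x.gram.det * (1 - x.a₁ ^ 2) := by
  rw [det_gram, cofactor₃₃_eq, cofactor₄₄_eq, cofactor₃₄_eq]
  ring

variable (f : R →+* S) (x : EdgeLabels R)

theorem det_gram_map : (x.map f).gram.det = f x.gram.det := by
  simp [det_gram, map, map_ofNat f 2]

theorem cofactor₃₃_map : (x.map f).cofactor₃₃ = f x.cofactor₃₃ := by
  simp [cofactor₃₃_eq, map, map_ofNat f 2]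

theorem cofactor₄₄_map : (x.map f).cofactor₄₄ = f x.cofactor₄₄ := by
  simp [cofactor₄₄_eq, map, map_ofNat f 2]

theorem cofactor₃₄_map : (x.map f).cofactor₃₄ = f x.cofactor₃₄ := by
  simp [cofactor₃₄_eq, map]

end Gram

section Field

variable {K : Type*} [Field K]

/-- The constant coefficient `q₀` of the quadratic attached to a tetrahedron. -/
def quadCoeff₀ (E : EdgeLabels K) : K :=
  E.a₁ * E.a₄ + E.a₂ * E.a₅ + E.a₃ * E.a₆ + E.a₁ * E.a₂ * E.a₆ + E.a₁ * E.a₃ * E.a₅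
    + E.a₂ * E.a₃ * E.a₄ + E.a₄ * E.a₅ * E.a₆ + E.a₁ * E.a₂ * E.a₃ * E.a₄ * E.a₅ * E.a₆

/-- The linear coefficient `q₁` of the quadratic attached to a tetrahedron. -/
def quadCoeff₁ (E : EdgeLabels K) : K :=
  -(E.a₁ - E.a₁⁻¹) * (E.a₄ - E.a₄⁻¹) - (E.a₂ - E.a₂⁻¹) * (E.a₅ - E.a₅⁻¹)
    - (E.a₃ - E.a₃⁻¹) * (E.a₆ - E.a₆⁻¹)

theorem quadCoeff₁_eq_halfSubInv [NeZero (2 : K)] (E : EdgeLabels K) :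
    E.quadCoeff₁ = -4 * (halfSubInv E.a₁ * halfSubInv E.a₄ + halfSubInv E.a₂ * halfSubInv E.a₅
      + halfSubInv E.a₃ * halfSubInv E.a₆) := by
  have h2 : (2 : K) ≠ 0 := two_ne_zero
  simp only [quadCoeff₁, halfSubInv]
  field_simp
  ring

/-- The leading coefficient `q₂` of the quadratic attached to a tetrahedron. Inverting the labels
replaces the complex conjugation of the paper and makes sense in any field. -/
def quadCoeff₂ (E : EdgeLabels K) : K := (E.map (·⁻¹)).quadCoeff₀

/-- The quadratic `q₂ z² + q₁ z + q₀` attached to a tetrahedron. -/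
def quadratic (E : EdgeLabels K) (z : K) : K :=
  E.quadCoeff₂ * z ^ 2 + E.quadCoeff₁ * z + E.quadCoeff₀

/-- The numerator of `φ`. -/
def phiNum (E : EdgeLabels K) : K :=
  (E.a₁ + E.a₂ * E.a₃) * (E.a₁ * E.a₂ * E.a₃ + 1) * (E.a₁ + E.a₅ * E.a₆)
    * (E.a₁ * E.a₅ * E.a₆ + 1)

/-- The denominator of `φ`. -/
def phiDenom (E : EdgeLabels K) : K :=
  (E.a₁ * E.a₂ + E.a₃) * (E.a₁ * E.a₃ + E.a₂) * (E.a₁ * E.a₅ + E.a₆) * (E.a₁ * E.a₆ + E.a₅)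

/-- The quantity `φ`. -/
def phi (E : EdgeLabels K) : K := E.phiNum / E.phiDenom

/-- The numerator of `ψ`, as a function of the root `z` of the quadratic. -/
def psiNum (E : EdgeLabels K) (z : K) : K :=
  (E.a₁ * E.a₂ * E.a₄ * E.a₅ - z) * (E.a₁ * E.a₃ * E.a₄ * E.a₆ - z)

/-- The denominator of `ψ`, as a function of the root `z` of the quadratic. -/
def psiDenom (E : EdgeLabels K) (z : K) : K :=
  E.a₄ * (E.a₁ * E.a₂ * E.a₃ + z) * (E.a₁ * E.a₅ * E.a₆ + z)

/-- The quantity `ψ`, as a function of the root `z` of the quadratic. -/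
def psi (E : EdgeLabels K) (z : K) : K := E.psiNum z / E.psiDenom z

/-- The monomial `μ = a₁² a₂ a₃ a₅ a₆` that clears the denominators in the identities for the
numerators of `φ` and `ψ`. -/
def clearingMonomial (E : EdgeLabels K) : K := E.a₁ ^ 2 * E.a₂ * E.a₃ * E.a₅ * E.a₆

section NonzeroLabels

variable {E : EdgeLabels K} (hE : E.Forall (· ≠ 0))
include hE

theorem quadratic_neg_mul_a₁_a₂_a₃ :
    E.quadratic (-(E.a₁ * E.a₂ * E.a₃)) =
      (E.a₁ * E.a₂ * E.a₃ + 1) * (E.a₃ + E.a₄ * E.a₅) * (E.a₂ + E.a₄ * E.a₆)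
        * (E.a₁ + E.a₅ * E.a₆) / (E.a₄ * E.a₅ * E.a₆) := by
  obtain ⟨h₁, h₂, h₃, h₄, h₅, h₆⟩ := hE
  simp only [quadratic, quadCoeff₀, quadCoeff₁, quadCoeff₂, map]
  field_simp
  ring

theorem quadratic_neg_mul_a₁_a₅_a₆ :
    E.quadratic (-(E.a₁ * E.a₅ * E.a₆)) =
      (E.a₁ * E.a₅ * E.a₆ + 1) * (E.a₆ + E.a₄ * E.a₂) * (E.a₅ + E.a₄ * E.a₃)
        * (E.a₁ + E.a₂ * E.a₃) / (E.a₄ * E.a₂ * E.a₃) := by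
  obtain ⟨h₁, h₂, h₃, h₄, h₅, h₆⟩ := hE
  simp only [quadratic, quadCoeff₀, quadCoeff₁, quadCoeff₂, map]
  field_simp
  ring

theorem quadratic_mul_a₁_a₂_a₄_a₅ :
    E.quadratic (E.a₁ * E.a₂ * E.a₄ * E.a₅) =
      (E.a₁ * E.a₂ + E.a₃) * (E.a₄ * E.a₅ + E.a₃) * (E.a₁ * E.a₅ + E.a₆)
        * (E.a₂ * E.a₄ + E.a₆) / (E.a₃ * E.a₆) := by
  obtain ⟨h₁, h₂, h₃, h₄, h₅, h₆⟩ := hE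
  simp only [quadratic, quadCoeff₀, quadCoeff₁, quadCoeff₂, map]
  field_simp
  ring

theorem quadratic_mul_a₁_a₃_a₄_a₆ :
    E.quadratic (E.a₁ * E.a₃ * E.a₄ * E.a₆) =
      (E.a₁ * E.a₃ + E.a₂) * (E.a₄ * E.a₆ + E.a₂) * (E.a₁ * E.a₆ + E.a₅)
        * (E.a₃ * E.a₄ + E.a₅) / (E.a₂ * E.a₅) := by
  obtain ⟨h₁, h₂, h₃, h₄, h₅, h₆⟩ := hE
  simp only [quadratic, quadCoeff₀, quadCoeff₁, quadCoeff₂, map]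
  field_simp
  ring

variable [NeZero (2 : K)]

theorem discrim_eq_det_gram :
    discrim E.quadCoeff₂ E.quadCoeff₁ E.quadCoeff₀ = 16 * (E.map halfAddInv).gram.det := by
  obtain ⟨h₁, h₂, h₃, h₄, h₅, h₆⟩ := hE
  have h2 : (2 : K) ≠ 0 := two_ne_zero
  simp only [discrim, det_gram, quadCoeff₀, quadCoeff₁, quadCoeff₂, map, halfAddInv]
  field_simp
  ring

theorem phiNum_mul_phiDenom :
    E.phiNum * E.phiDenom = 16 * E.clearingMonomial ^ 2
      * ((E.map halfAddInv).cofactor₃₃ * (E.map halfAddInv).cofactor₄₄) := by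
  obtain ⟨h₁, h₂, h₃, -, h₅, h₆⟩ := hE
  have h2 : (2 : K) ≠ 0 := two_ne_zero
  simp only [phiNum, phiDenom, clearingMonomial, cofactor₃₃_eq, cofactor₄₄_eq, map, halfAddInv]
  field_simp
  ring

theorem phiNum_mul_psiNum_add (z : K) :
    E.phiNum * E.psiNum z + 4 * E.clearingMonomial * ((E.map halfAddInv).cofactor₃₄
        + halfSubInv E.a₁ * ((2 * E.quadCoeff₂ * z + E.quadCoeff₁) / 4)) * E.psiDenom z
      = E.clearingMonomial * E.a₄ * (2 * halfSubInv E.a₁ * z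
        + E.a₁ * (1 + E.a₁ * E.a₂ * E.a₃ + E.a₁ * E.a₅ * E.a₆ + E.a₂ * E.a₃ * E.a₅ * E.a₆))
        * E.quadratic z := by
  obtain ⟨h₁, h₂, h₃, h₄, h₅, h₆⟩ := hE
  have h2 : (2 : K) ≠ 0 := two_ne_zero
  have h4 : (4 : K) = 2 * 2 := by norm_num
  simp only [phiNum, psiNum, psiDenom, clearingMonomial, cofactor₃₄_eq, quadratic, quadCoeff₀,
    quadCoeff₁, quadCoeff₂, map, halfAddInv, halfSubInv, h4]
  field_simp
  ring

theorem phiNum_mul_psiNum {z r : K} (hz : E.quadratic z = 0)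
    (hr : 2 * E.quadCoeff₂ * z + E.quadCoeff₁ = 4 * r) :
    E.phiNum * E.psiNum z = -4 * E.clearingMonomial
      * ((E.map halfAddInv).cofactor₃₄ + halfSubInv E.a₁ * r) * E.psiDenom z := by
  have h4 : (4 : K) ≠ 0 := by simpa [show (4 : K) = 2 ^ 2 by norm_num] using two_ne_zero (α := K)
  have key := phiNum_mul_psiNum_add hE z
  rw [hz, hr, mul_div_cancel_left₀ r h4] at key
  linear_combination key

theorem sq_eq_det_gram {z r : K} (hz : E.quadratic z = 0)
    (hr : 2 * E.quadCoeff₂ * z + E.quadCoeff₁ = 4 * r) :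
    r ^ 2 = (E.map halfAddInv).gram.det := by
  have h16 : (16 : K) ≠ 0 := by
    simpa [show (16 : K) = 2 ^ 4 by norm_num] using two_ne_zero (α := K)
  refine mul_left_cancel₀ h16 ?_
  rw [← discrim_eq_det_gram hE, discrim]
  rw [quadratic] at hz
  linear_combination (-4 * r - 2 * E.quadCoeff₂ * z - E.quadCoeff₁) * hr
    + 4 * E.quadCoeff₂ * hz

theorem cofactor₃₄_add_sq {z r : K} (hz : E.quadratic z = 0)
    (hr : 2 * E.quadCoeff₂ * z + E.quadCoeff₁ = 4 * r) :
    ((E.map halfAddInv).cofactor₃₄ + halfSubInv E.a₁ * r) ^ 2 =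
      2 * (E.map halfAddInv).cofactor₃₄ ^ 2
        - (E.map halfAddInv).cofactor₃₃ * (E.map halfAddInv).cofactor₄₄
        + 2 * (E.map halfAddInv).cofactor₃₄ * r * halfSubInv E.a₁ := by
  have jacobi := cofactor₃₃_mul_cofactor₄₄ (E.map halfAddInv)
  rw [← sq_eq_det_gram hE hz hr, show (E.map halfAddInv).a₁ = halfAddInv E.a₁ from rfl] at jacobi
  linear_combination jacobi + r ^ 2 * halfSubInv_sq (show E.a₁ ≠ 0 from hE.1)

theorem phi_mul_psi_sq {z r : K} (hN : E.phiNum ≠ 0) (hD : E.phiDenom ≠ 0)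
    (hψ : E.psiDenom z ≠ 0) (hz : E.quadratic z = 0)
    (hr : 2 * E.quadCoeff₂ * z + E.quadCoeff₁ = 4 * r) :
    E.phi * E.psi z ^ 2 =
      (2 * (E.map halfAddInv).cofactor₃₄ ^ 2
          - (E.map halfAddInv).cofactor₃₃ * (E.map halfAddInv).cofactor₄₄
          + 2 * (E.map halfAddInv).cofactor₃₄ * r * halfSubInv E.a₁)
        / ((E.map halfAddInv).cofactor₃₃ * (E.map halfAddInv).cofactor₄₄) := by
  rw [← cofactor₃₄_add_sq hE hz hr]
  set c := (E.map halfAddInv).cofactor₃₃ * (E.map halfAddInv).cofactor₄₄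
  set R := (E.map halfAddInv).cofactor₃₄ + halfSubInv E.a₁ * r
  have hND : E.phiNum * E.phiDenom = 16 * E.clearingMonomial ^ 2 * c := phiNum_mul_phiDenom hE
  have hc : 16 * E.clearingMonomial ^ 2 * c ≠ 0 := hND ▸ mul_ne_zero hN hD
  calc E.phi * E.psi z ^ 2
      = (E.phiNum * E.psiNum z) ^ 2 / (E.phiNum * E.phiDenom * E.psiDenom z ^ 2) := by
        rw [phi, psi]
        field_simp
    _ = 16 * E.clearingMonomial ^ 2 * (R ^ 2 * E.psiDenom z ^ 2)
          / (16 * E.clearingMonomial ^ 2 * (c * E.psiDenom z ^ 2)) := by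
        rw [phiNum_mul_psiNum hE hz hr, hND]
        ring
    _ = R ^ 2 / c := by
        rw [mul_div_mul_left _ _ (left_ne_zero_of_mul hc),
          mul_div_mul_right _ _ (pow_ne_zero 2 hψ)]

end NonzeroLabels

end Field

section Complex

/-- The labels `aⱼ = exp (i θⱼ)`. -/
noncomputable def expI (θ : EdgeLabels ℝ) : EdgeLabels ℂ :=
  θ.map fun t : ℝ => Complex.exp (t * Complex.I)

variable (θ : EdgeLabels ℝ)

theorem forall_expI_ne_zero : θ.expI.Forall (· ≠ 0) := by
  simp [Forall, expI, map]

theorem forall_norm_expI : θ.expI.Forall (‖·‖ = 1) := by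
  simp [Forall, expI, map, Complex.norm_exp_ofReal_mul_I]

theorem map_halfAddInv_expI :
    θ.expI.map halfAddInv = (θ.map Real.cos).map Complex.ofRealHom := by
  simp [expI, map, halfAddInv_exp_mul_I]

theorem quadCoeff₁_expI :
    θ.expI.quadCoeff₁ = ((4 * (Real.sin θ.a₁ * Real.sin θ.a₄ + Real.sin θ.a₂ * Real.sin θ.a₅
      + Real.sin θ.a₃ * Real.sin θ.a₆) : ℝ) : ℂ) := by
  simp only [quadCoeff₁_eq_halfSubInv, expI, map, halfSubInv_exp_mul_I]
  push_cast
  linear_combination (-4 * (Complex.sin θ.a₁ * Complex.sin θ.a₄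
    + Complex.sin θ.a₂ * Complex.sin θ.a₅ + Complex.sin θ.a₃ * Complex.sin θ.a₆)) * Complex.I_sq

theorem quadCoeff₂_expI : θ.expI.quadCoeff₂ = conj θ.expI.quadCoeff₀ := by
  simp [quadCoeff₂, quadCoeff₀, expI, map, ← Complex.exp_conj, ← Complex.exp_neg]

theorem discrim_expI :
    discrim θ.expI.quadCoeff₂ θ.expI.quadCoeff₁ θ.expI.quadCoeff₀
      = ((16 * (θ.map Real.cos).gram.det : ℝ) : ℂ) := by
  rw [discrim_eq_det_gram θ.forall_expI_ne_zero, map_halfAddInv_expI, det_gram_map]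
  simp

variable {θ}

section PositiveDeterminant

variable (hdet : 0 < (θ.map Real.cos).gram.det)
include hdet

theorem quadratic_expI_ne_zero {z : ℂ} (hz : ‖z‖ = 1) : θ.expI.quadratic z ≠ 0 := by
  intro h
  rw [quadratic, quadCoeff₂_expI, quadCoeff₁_expI] at h
  have hle := sq_le_of_conj_mul_sq_add_eq_zero hz h
  have hdisc := θ.discrim_expI
  rw [discrim, quadCoeff₂_expI, quadCoeff₁_expI, mul_assoc, Complex.conj_mul'] at hdisc
  norm_cast at hdisc
  linarith

theorem phiNum_expI_ne_zero : θ.expI.phiNum ≠ 0 := by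
  obtain ⟨n₁, n₂, n₃, -, n₅, n₆⟩ := θ.forall_norm_expI
  have h₁₂₃ := quadratic_expI_ne_zero hdet (z := -(θ.expI.a₁ * θ.expI.a₂ * θ.expI.a₃))
    (by simp [n₁, n₂, n₃])
  have h₁₅₆ := quadratic_expI_ne_zero hdet (z := -(θ.expI.a₁ * θ.expI.a₅ * θ.expI.a₆))
    (by simp [n₁, n₅, n₆])
  rw [quadratic_neg_mul_a₁_a₂_a₃ θ.forall_expI_ne_zero] at h₁₂₃
  rw [quadratic_neg_mul_a₁_a₅_a₆ θ.forall_expI_ne_zero] at h₁₅₆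
  simp_all [phiNum]

theorem phiDenom_expI_ne_zero : θ.expI.phiDenom ≠ 0 := by
  obtain ⟨n₁, n₂, n₃, n₄, n₅, n₆⟩ := θ.forall_norm_expI
  have h₁₂₄₅ := quadratic_expI_ne_zero hdet
    (z := θ.expI.a₁ * θ.expI.a₂ * θ.expI.a₄ * θ.expI.a₅) (by simp [n₁, n₂, n₄, n₅])
  have h₁₃₄₆ := quadratic_expI_ne_zero hdet
    (z := θ.expI.a₁ * θ.expI.a₃ * θ.expI.a₄ * θ.expI.a₆) (by simp [n₁, n₃, n₄, n₆])
  rw [quadratic_mul_a₁_a₂_a₄_a₅ θ.forall_expI_ne_zero] at h₁₂₄₅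
  rw [quadratic_mul_a₁_a₃_a₄_a₆ θ.forall_expI_ne_zero] at h₁₃₄₆
  simp_all [phiDenom]

theorem psiDenom_expI_ne_zero {z : ℂ} (hz : θ.expI.quadratic z = 0) :
    θ.expI.psiDenom z ≠ 0 := by
  obtain ⟨n₁, n₂, n₃, -, n₅, n₆⟩ := θ.forall_norm_expI
  have add_ne_zero {A : ℂ} (hA : ‖A‖ = 1) : A + z ≠ 0 := fun h =>
    quadratic_expI_ne_zero hdet (by rw [norm_neg, hA] : ‖-A‖ = 1)
      (neg_eq_of_add_eq_zero_right h ▸ hz)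
  exact mul_ne_zero (mul_ne_zero θ.forall_expI_ne_zero.2.2.2.1
    (add_ne_zero (by simp [n₁, n₂, n₃]))) (add_ne_zero (by simp [n₁, n₅, n₆]))

end PositiveDeterminant

theorem quadCoeff₁_expI_re_nonneg (hθ : θ.Forall (· ∈ Set.Icc 0 π)) :
    0 ≤ θ.expI.quadCoeff₁.re := by
  obtain ⟨h₁, h₂, h₃, h₄, h₅, h₆⟩ := hθ
  have s₁ := Real.sin_nonneg_of_mem_Icc h₁
  have s₂ := Real.sin_nonneg_of_mem_Icc h₂
  have s₃ := Real.sin_nonneg_of_mem_Icc h₃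
  have s₄ := Real.sin_nonneg_of_mem_Icc h₄
  have s₅ := Real.sin_nonneg_of_mem_Icc h₅
  have s₆ := Real.sin_nonneg_of_mem_Icc h₆
  rw [quadCoeff₁_expI, Complex.ofReal_re]
  positivity

/-- The root `z₀` of the quadratic singled out by the nonnegative square root of the discriminant,
for labels on the unit circle, where `q₂ = conj q₀`. -/
noncomputable def distinguishedRoot (E : EdgeLabels ℂ) : ℂ :=
  (-E.quadCoeff₁ + ((√((E.quadCoeff₁ ^ 2 - 4 * E.quadCoeff₀ * conj E.quadCoeff₀).re) : ℝ) : ℂ))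
    / (2 * conj E.quadCoeff₀)

theorem distinguishedRoot_spec (hdet : 0 ≤ (θ.map Real.cos).gram.det)
    (hq₁ : 0 ≤ θ.expI.quadCoeff₁.re) :
    θ.expI.quadratic θ.expI.distinguishedRoot = 0 ∧
      2 * θ.expI.quadCoeff₂ * θ.expI.distinguishedRoot + θ.expI.quadCoeff₁
        = 4 * ((√(θ.map Real.cos).gram.det : ℝ) : ℂ) := by
  set D := (θ.map Real.cos).gram.det
  have hdisc := θ.discrim_expI
  have hsqrt : √((θ.expI.quadCoeff₁ ^ 2 - 4 * θ.expI.quadCoeff₀ * conj θ.expI.quadCoeff₀).re)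
      = 4 * √D := by
    rw [← quadCoeff₂_expI, mul_right_comm, ← discrim, hdisc, Complex.ofReal_re,
      Real.sqrt_mul (by norm_num), show (16 : ℝ) = 4 ^ 2 by norm_num, Real.sqrt_sq (by norm_num)]
  have hsq : (16 * D : ℝ) = (4 * √D) * (4 * √D) := by
    linear_combination -16 * Real.mul_self_sqrt hdet
  rw [hsq, Complex.ofReal_mul] at hdisc
  have hdegenerate (h₂ : θ.expI.quadCoeff₂ = 0) :
      θ.expI.quadCoeff₁ = ((4 * √D : ℝ) : ℂ) ∧ θ.expI.quadCoeff₀ = 0 := by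
    refine ⟨?_, by simpa [quadCoeff₂_expI] using h₂⟩
    rw [discrim, h₂, mul_zero, zero_mul, sub_zero] at hdisc
    rw [quadCoeff₁_expI, Complex.ofReal_re] at hq₁
    rw [quadCoeff₁_expI] at hdisc ⊢
    norm_cast at hdisc ⊢
    refine (pow_left_inj₀ hq₁ (by positivity) two_ne_zero).1 ?_
    rw [hdisc, sq]
  have spec := quadratic_formula_spec hdisc hdegenerate
  rw [distinguishedRoot, hsqrt, ← quadCoeff₂_expI]
  simpa [quadratic] using spec

end Complex

end EdgeLabels

open EdgeLabels in
theorem phi_psi_sq_eq_general (θ : EdgeLabels ℝ) (hdet : 0 < (θ.map Real.cos).gram.det) {z r : ℂ}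
    (hz : θ.expI.quadratic z = 0)
    (hr : 2 * θ.expI.quadCoeff₂ * z + θ.expI.quadCoeff₁ = 4 * r) :
    θ.expI.phi * θ.expI.psi z ^ 2 =
      (((2 * (θ.map Real.cos).cofactor₃₄ ^ 2
            - (θ.map Real.cos).cofactor₃₃ * (θ.map Real.cos).cofactor₄₄ : ℝ) : ℂ)
          + 2 * Complex.I * ((θ.map Real.cos).cofactor₃₄ : ℂ) * r * ((Real.sin θ.a₁ : ℝ) : ℂ))
        / (((θ.map Real.cos).cofactor₃₃ * (θ.map Real.cos).cofactor₄₄ : ℝ) : ℂ) := by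
  have hsin : halfSubInv θ.expI.a₁ = Complex.I * (Real.sin θ.a₁ : ℂ) := halfSubInv_exp_mul_I θ.a₁
  rw [phi_mul_psi_sq θ.forall_expI_ne_zero (phiNum_expI_ne_zero hdet) (phiDenom_expI_ne_zero hdet)
    (psiDenom_expI_ne_zero hdet hz) hz hr, map_halfAddInv_expI, cofactor₃₃_map, cofactor₄₄_map,
    cofactor₃₄_map, hsin]
  simp only [Complex.ofRealHom_eq_coe]
  push_cast
  ring

theorem phi_psi_sq_eq
    (θ₁ θ₂ θ₃ θ₄ θ₅ θ₆ : ℝ)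
    (h₁ : θ₁ ∈ Set.Ioo 0 π) (h₂ : θ₂ ∈ Set.Ioo 0 π) (h₃ : θ₃ ∈ Set.Ioo 0 π)
    (h₄ : θ₄ ∈ Set.Ioo 0 π) (h₅ : θ₅ ∈ Set.Ioo 0 π) (h₆ : θ₆ ∈ Set.Ioo 0 π)
    (a₁ a₂ a₃ a₄ a₅ a₆ : ℂ)
    (ha₁ : a₁ = Complex.exp (θ₁ * Complex.I)) (ha₂ : a₂ = Complex.exp (θ₂ * Complex.I))
    (ha₃ : a₃ = Complex.exp (θ₃ * Complex.I)) (ha₄ : a₄ = Complex.exp (θ₄ * Complex.I))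
    (ha₅ : a₅ = Complex.exp (θ₅ * Complex.I)) (ha₆ : a₆ = Complex.exp (θ₆ * Complex.I))
    (G : Matrix (Fin 4) (Fin 4) ℝ)
    (hG : G = !![1, -Real.cos θ₁, -Real.cos θ₂, -Real.cos θ₆;
                 -Real.cos θ₁, 1, -Real.cos θ₃, -Real.cos θ₅;
                 -Real.cos θ₂, -Real.cos θ₃, 1, -Real.cos θ₄;
                 -Real.cos θ₆, -Real.cos θ₅, -Real.cos θ₄, 1])
    (hdet : 0 < G.det)
    (q₀ q₁ q₂ : ℂ)
    (hq₀ : q₀ = a₁*a₄ + a₂*a₅ + a₃*a₆ + a₁*a₂*a₆ + a₁*a₃*a₅ + a₂*a₃*a₄ + a₄*a₅*a₆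
      + a₁*a₂*a₃*a₄*a₅*a₆)
    (hq₁ : q₁ = -(a₁ - a₁⁻¹)*(a₄ - a₄⁻¹) - (a₂ - a₂⁻¹)*(a₅ - a₅⁻¹) - (a₃ - a₃⁻¹)*(a₆ - a₆⁻¹))
    (hq₂ : q₂ = conj q₀)
    (z₀ : ℂ)
    (hz₀ : z₀ = (-q₁ + ((Real.sqrt ((q₁ ^ 2 - 4 * q₀ * q₂).re) : ℝ) : ℂ)) / (2 * q₂))
    (c₃₃ c₄₄ c₃₄ : ℝ)
    (hc₃₃ : c₃₃ = (!![1, -Real.cos θ₁, -Real.cos θ₆;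
                     -Real.cos θ₁, 1, -Real.cos θ₅;
                     -Real.cos θ₆, -Real.cos θ₅, 1] : Matrix (Fin 3) (Fin 3) ℝ).det)
    (hc₄₄ : c₄₄ = (!![1, -Real.cos θ₁, -Real.cos θ₂;
                     -Real.cos θ₁, 1, -Real.cos θ₃;
                     -Real.cos θ₂, -Real.cos θ₃, 1] : Matrix (Fin 3) (Fin 3) ℝ).det)
    (hc₃₄ : c₃₄ = -(!![1, -Real.cos θ₁, -Real.cos θ₂;
                      -Real.cos θ₁, 1, -Real.cos θ₃;
                      -Real.cos θ₆, -Real.cos θ₅, -Real.cos θ₄] : Matrix (Fin 3) (Fin 3) ℝ).det)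
    (φ ψ : ℂ)
    (hφ : φ = ((a₁ + a₂*a₃) * (a₁*a₂*a₃ + 1) * (a₁ + a₅*a₆) * (a₁*a₅*a₆ + 1))
      / ((a₁*a₂ + a₃) * (a₁*a₃ + a₂) * (a₁*a₅ + a₆) * (a₁*a₆ + a₅)))
    (hψ : ψ = ((a₁*a₂*a₄*a₅ - z₀) * (a₁*a₃*a₄*a₆ - z₀))
      / (a₄ * (a₁*a₂*a₃ + z₀) * (a₁*a₅*a₆ + z₀))) :
    φ * ψ ^ 2 = (((2 * c₃₄ ^ 2 - c₃₃ * c₄₄ : ℝ) : ℂ)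
        + 2 * Complex.I * (c₃₄ : ℂ) * ((Real.sqrt G.det : ℝ) : ℂ) * ((Real.sin θ₁ : ℝ) : ℂ))
      / ((c₃₃ * c₄₄ : ℝ) : ℂ) := by
  subst ha₁ ha₂ ha₃ ha₄ ha₅ ha₆ hG hq₀ hq₁ hq₂ hz₀ hc₃₃ hc₄₄ hc₃₄ hφ hψ
  let θ : EdgeLabels ℝ := ⟨θ₁, θ₂, θ₃, θ₄, θ₅, θ₆⟩
  have hθ : θ.Forall (· ∈ Set.Ioo 0 π) := ⟨h₁, h₂, h₃, h₄, h₅, h₆⟩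
  obtain ⟨hz, hr⟩ := EdgeLabels.distinguishedRoot_spec (θ := θ) hdet.le
    (θ.quadCoeff₁_expI_re_nonneg (hθ.imp Set.Ioo_subset_Icc_self))
  exact phi_psi_sq_eq_general θ hdet hz hr
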